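/- For every doubly even self-dual binary code C of length 96 with minimum weight at least 16, the number of codewords of weight 20 satisfies A_20(C) = 3217056 − 16·A_16(C), and consequently A_16(C) ≤ 201066, where A_i(C) denotes the number of codewords of C of Hamming weight i. -/

import Mathlib

/-- The standard inner product on `ι → ZMod 2`. -/
def dot {ι : Type*} [Fintype ι] (x y : ι → ZMod 2) : ZMod 2 := ∑ i, x i * y i

/-- A binary linear code is self-dual if it coincides with its dual. -/
def IsSelfDual {ι : Type*} [Fintype ι] (C : Submodule (ZMod 2) (ι → ZMod 2)) : Prop :=
  ∀ x, x ∈ C ↔ ∀ y ∈ C, dot x y = 0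

/-- `C` has minimum (nonzero) weight exactly `d`. -/
def MinWeightIs {ι : Type*} [Fintype ι] (C : Submodule (ZMod 2) (ι → ZMod 2)) (d : ℕ) : Prop :=
  (∃ x ∈ C, x ≠ 0 ∧ hammingNorm x = d) ∧ ∀ x ∈ C, x ≠ 0 → d ≤ hammingNorm x

/-- `A_i(C)`: the number of codewords of `C` of Hamming weight `i`. -/
noncomputable def weightEnum {ι : Type*} [Fintype ι] (C : Submodule (ZMod 2) (ι → ZMod 2)) (i : ℕ) : ℕ :=
  Set.ncard {x : ι → ZMod 2 | x ∈ C ∧ hammingNorm x = i}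

/-- Two codes are equivalent if a coordinate permutation maps one onto the other. -/
def CodeEquiv {ι : Type*} [Fintype ι] (C C' : Submodule (ZMod 2) (ι → ZMod 2)) : Prop :=
  ∃ σ : Equiv.Perm ι, Submodule.map (LinearMap.funLeft (ZMod 2) (ZMod 2) ⇑σ) C = C'

/-- The order of the automorphism group of a code: the number of coordinate
permutations mapping the code onto itself. -/
noncomputable def autGroupOrder {ι : Type*} [Fintype ι] (C : Submodule (ZMod 2) (ι → ZMod 2)) : ℕ :=
  Nat.card {σ : Equiv.Perm ι // Submodule.map (LinearMap.funLeft (ZMod 2) (ZMod 2) ⇑σ) C = C}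

/-- A circulant matrix: each row is the cyclic shift of the previous one. -/
def IsCirculant {n : ℕ} (R : Matrix (Fin n) (Fin n) (ZMod 2)) : Prop :=
  ∃ v : Fin n → ZMod 2, R = Matrix.circulant v

/-- The pure double circulant code with generator matrix `(I_n | R)`. -/
def pureDCC {n : ℕ} (R : Matrix (Fin n) (Fin n) (ZMod 2)) :
    Submodule (ZMod 2) (Fin n ⊕ Fin n → ZMod 2) :=
  Submodule.span (ZMod 2)
    (Set.range fun i : Fin n =>
      Sum.elim (fun j => if j = i then (1 : ZMod 2) else 0) (R i))

/-- A bordered matrix: first row `(0,1,…,1)`, first column `(0,1,…,1)ᵀ`, and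
lower-right block an `n × n` circulant matrix. -/
def IsBorderMatrix {n : ℕ} (B : Matrix (Fin (n + 1)) (Fin (n + 1)) (ZMod 2)) : Prop :=
  B 0 0 = 0 ∧ (∀ j, j ≠ 0 → B 0 j = 1) ∧ (∀ i, i ≠ 0 → B i 0 = 1) ∧
  ∃ R' : Matrix (Fin n) (Fin n) (ZMod 2), IsCirculant R' ∧
    ∀ i j : Fin n, B i.succ j.succ = R' i j

/-- The bordered double circulant code with generator matrix `(I_{n+1} | B)`. -/
def borderedDCC {n : ℕ} (B : Matrix (Fin (n + 1)) (Fin (n + 1)) (ZMod 2)) :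
    Submodule (ZMod 2) (Fin (n + 1) ⊕ Fin (n + 1) → ZMod 2) :=
  Submodule.span (ZMod 2)
    (Set.range fun i : Fin (n + 1) =>
      Sum.elim (fun j => if j = i then (1 : ZMod 2) else 0) (B i))

/-!
Any fewer than `d` coordinates of a linear code with dual distance `d` take every pattern equally
often, so a function of fewer than `d` coordinates has the same mean over the code as over the
whole space. The `k`-th power of the Hamming weight is a sum of functions of `k` coordinates each,
so every polynomial of degree less than `d` in the weight has this property.

A self-dual code contains the all-one word, so the weights in question are `0`, `16`, `20`, …,
`80`, `96`. Comparing the means of the polynomial of degree `15 < 16` that vanishes at `24`, `28`,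
…, `80` leaves a single linear relation between `A₁₆` and `A₂₀`.
-/

open scoped Matrix

namespace LinearCode

theorem hammingNorm_pow {ι R : Type*} {β : ι → Type*} [Fintype ι] [∀ i, DecidableEq (β i)]
    [∀ i, Zero (β i)] [CommSemiring R] (x : ∀ i, β i) (k : ℕ) :
    (hammingNorm x : R) ^ k = ∑ t : Fin k → ι, ∏ j, if x (t j) ≠ 0 then 1 else 0 := by
  rw [hammingNorm, Finset.natCast_card_filter, Fintype.sum_pow]

theorem nondegenerate_dotProductBilin {ι R : Type*} [Fintype ι] [CommSemiring R] :
    (dotProductBilin R R : LinearMap.BilinForm R (ι → R)).Nondegenerate :=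
  ⟨dotProduct_eq_zero, fun v hv ↦ dotProduct_eq_zero v fun w ↦
    (dotProduct_comm v w).trans (hv w)⟩

section Field

variable {ι K : Type*} [Fintype ι] [Field K]

/-- The dual `C^⊥` of a linear code with respect to the standard inner product, realised as an
orthogonal complement so that the library's dimension formula applies. -/
def dual (C : Submodule K (ι → K)) : Submodule K (ι → K) :=
  LinearMap.BilinForm.orthogonal (dotProductBilin K K) C

theorem mem_dual {C : Submodule K (ι → K)} {v : ι → K} : v ∈ dual C ↔ ∀ y ∈ C, v ⬝ᵥ y = 0 :=
  forall₂_congr fun y _ ↦ by rw [dotProduct_comm v y]; rfl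

theorem finrank_add_finrank_dual (C : Submodule K (ι → K)) :
    Module.finrank K C + Module.finrank K (dual C) = Fintype.card ι := by
  rw [dual, LinearMap.BilinForm.finrank_orthogonal nondegenerate_dotProductBilin,
    Nat.add_sub_cancel' C.finrank_le, Module.finrank_fintype_fun_eq_card]

theorem eq_top_of_dual_eq_bot {C : Submodule K (ι → K)} (hC : dual C = ⊥) : C = ⊤ := by
  have dim := finrank_add_finrank_dual C
  rw [hC, finrank_bot, add_zero] at dim
  exact Submodule.eq_top_of_finrank_eq (dim.trans (Module.finrank_fintype_fun_eq_card K).symm)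

variable [DecidableEq K]

-- Otherwise `C` and the vectors vanishing on `T` span a proper subspace; a nonzero vector
-- orthogonal to both is a dual codeword supported on `T`, hence of weight less than `d`.
theorem exists_mem_eqOn_of_card_lt {C : Submodule K (ι → K)} {d : ℕ}
    (hd : ∀ v ∈ dual C, v ≠ 0 → d ≤ hammingNorm v) {T : Finset ι} (hT : T.card < d) (y : ι → K) :
    ∃ c ∈ C, Set.EqOn c y T := by
  classical
  let Z : Submodule K (ι → K) := Submodule.pi T fun _ ↦ ⊥
  have dual_sup : dual (C ⊔ Z) = ⊥ := by
    refine (Submodule.eq_bot_iff _).2 fun v hv ↦ by_contra fun hv0 ↦ ?_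
    rw [mem_dual] at hv
    have support_subset : ({i | v i ≠ 0} : Finset ι) ⊆ T := by
      intro i hi
      by_contra hiT
      have single_mem : Pi.single i 1 ∈ Z := fun j hj ↦
        Pi.single_eq_of_ne (fun h : j = i ↦ hiT (h ▸ hj)) 1
      have vi_eq_zero : v i = 0 := by
        simpa only [dotProduct_single_one] using hv _ (Submodule.mem_sup_right single_mem)
      exact (Finset.mem_filter.1 hi).2 vi_eq_zero
    have d_le := hd v (mem_dual.2 fun y hy ↦ hv y (Submodule.mem_sup_left hy)) hv0
    exact absurd (d_le.trans (Finset.card_le_card support_subset)) hT.not_ge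
  have hy : y ∈ C ⊔ Z := eq_top_of_dual_eq_bot dual_sup ▸ Submodule.mem_top
  obtain ⟨c, hc, z, hz, rfl⟩ := Submodule.mem_sup.1 hy
  exact ⟨c, hc, fun i hi ↦ by simp [show z i = 0 from hz i hi]⟩

variable [Fintype K] [DecidableEq ι]

theorem card_nsmul_sum_eq_of_dependsOn {M : Type*} [AddCommMonoid M] {C : Submodule K (ι → K)}
    [Fintype C] {d : ℕ} (hd : ∀ v ∈ dual C, v ≠ 0 → d ≤ hammingNorm v) {T : Finset ι}
    (hT : T.card < d) {f : (ι → K) → M} (hf : DependsOn f T) :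
    Nat.card (ι → K) • ∑ x : C, f x = Nat.card C • ∑ y, f y := by
  have sum_translate (y : ι → K) : ∑ x : C, f x = ∑ x : C, f (x + y) := by
    obtain ⟨c, hc, hcy⟩ := exists_mem_eqOn_of_card_lt hd hT y
    rw [← Equiv.sum_comp (Equiv.addRight (⟨c, hc⟩ : C))]
    exact Finset.sum_congr rfl fun x _ ↦ hf fun i hi ↦ by simp [hcy hi]
  calc Nat.card (ι → K) • ∑ x : C, f x
      = ∑ y : ι → K, ∑ x : C, f (x + y) := by
        simp only [← sum_translate, Finset.sum_const, Finset.card_univ, Nat.card_eq_fintype_card]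
    _ = ∑ x : C, ∑ y, f y := by
        rw [Finset.sum_comm]
        exact Finset.sum_congr rfl fun x _ ↦ Equiv.sum_comp (Equiv.addLeft (x : ι → K)) f
    _ = Nat.card C • ∑ y, f y := by
        rw [Finset.sum_const, Finset.card_univ, Nat.card_eq_fintype_card]

theorem card_mul_sum_hammingNorm_pow {R : Type*} [CommSemiring R] {C : Submodule K (ι → K)}
    [Fintype C] {d : ℕ} (hd : ∀ v ∈ dual C, v ≠ 0 → d ≤ hammingNorm v) {k : ℕ} (hk : k < d) :
    (Nat.card (ι → K) : R) * ∑ x : C, (hammingNorm (x : ι → K) : R) ^ k =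
      Nat.card C * ∑ y : ι → K, (hammingNorm y : R) ^ k := by
  have average (t : Fin k → ι) := card_nsmul_sum_eq_of_dependsOn (C := C) hd
    (T := Finset.univ.image t) (Finset.card_image_le.trans_lt (by simpa using hk))
    (f := fun x ↦ ∏ j, if x (t j) ≠ 0 then (1 : R) else 0)
    fun x y h ↦ Finset.prod_congr rfl fun j _ ↦ by rw [h (t j) (by simp)]
  simp only [hammingNorm_pow]
  rw [Finset.sum_comm, Finset.sum_comm (s := (Finset.univ : Finset (ι → K))), Finset.mul_sum,
    Finset.mul_sum]
  exact Finset.sum_congr rfl fun t _ ↦ by simpa only [nsmul_eq_mul] using average t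

theorem card_mul_sum_eval_hammingNorm {R : Type*} [CommSemiring R] {C : Submodule K (ι → K)}
    [Fintype C] {d : ℕ} (hd : ∀ v ∈ dual C, v ≠ 0 → d ≤ hammingNorm v) {p : Polynomial R}
    (hp : p.natDegree < d) :
    (Nat.card (ι → K) : R) * ∑ x : C, p.eval (hammingNorm (x : ι → K) : R) =
      Nat.card C * ∑ y : ι → K, p.eval (hammingNorm y : R) := by
  simp only [Polynomial.eval_eq_sum_range' hp]
  rw [Finset.sum_comm, Finset.sum_comm (s := (Finset.univ : Finset (ι → K)))]
  simp only [← Finset.mul_sum]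
  rw [Finset.mul_sum, Finset.mul_sum]
  refine Finset.sum_congr rfl fun k hk ↦ ?_
  rw [mul_left_comm, card_mul_sum_hammingNorm_pow hd (Finset.mem_range.1 hk), mul_left_comm]

end Field

section WeightDistribution

variable {ι : Type*} [Fintype ι] (C : Submodule (ZMod 2) (ι → ZMod 2))

theorem weightEnum_eq_card_filter [Fintype C] (w : ℕ) :
    weightEnum C w = Finset.card {x : C | hammingNorm (x : ι → ZMod 2) = w} := by
  rw [weightEnum, ← Set.ncard_coe_finset, ← Set.ncard_image_of_injective _ Subtype.val_injective]
  congr 1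
  ext x
  simp [and_comm]

theorem sum_comp_hammingNorm {M : Type*} [AddCommMonoid M] [Fintype C] (f : ℕ → M) :
    ∑ x : C, f (hammingNorm (x : ι → ZMod 2)) =
      ∑ w ∈ Finset.range (Fintype.card ι + 1), weightEnum C w • f w := by
  have weight_mem_range (x : C) (_ : x ∈ Finset.univ) :
      hammingNorm (x : ι → ZMod 2) ∈ Finset.range (Fintype.card ι + 1) :=
    Finset.mem_range_succ_iff.2 hammingNorm_le_card_fintype
  rw [← Finset.sum_fiberwise_of_maps_to' weight_mem_range]
  simp only [Finset.sum_const, weightEnum_eq_card_filter]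

theorem sum_univ_comp_hammingNorm {M : Type*} [AddCommMonoid M] [DecidableEq ι] (f : ℕ → M) :
    ∑ x : ι → ZMod 2, f (hammingNorm x) =
      ∑ w ∈ Finset.range (Fintype.card ι + 1), (Fintype.card ι).choose w • f w := by
  rw [← Finset.card_univ, ← Finset.sum_powerset_apply_card]
  refine Finset.sum_bij' (fun x _ ↦ ({i | x i ≠ 0} : Finset ι))
    (fun s _ i ↦ if i ∈ s then 1 else 0) (by simp) (by simp) (fun x _ ↦ ?_) (by simp)
    fun _ _ ↦ rfl
  have indicator_ne_zero : ∀ a : ZMod 2, (if a ≠ 0 then 1 else 0) = a := by decide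
  ext i
  simpa using indicator_ne_zero (x i)

theorem weightEnum_zero : weightEnum C 0 = 1 := by
  rw [weightEnum, Set.ncard_eq_one]
  refine ⟨0, Set.ext fun x ↦ ?_⟩
  simp +contextual [C.zero_mem]

variable {C}

theorem exists_mem_of_weightEnum_ne_zero {w : ℕ} (hw : weightEnum C w ≠ 0) :
    ∃ x ∈ C, hammingNorm x = w :=
  Set.nonempty_of_ncard_ne_zero hw

theorem hammingNorm_add_one (x : ι → ZMod 2) :
    hammingNorm (x + 1) = Fintype.card ι - hammingNorm x := by
  classical
  have add_one_ne_zero : ∀ a : ZMod 2, a + 1 ≠ 0 ↔ ¬a ≠ 0 := by decide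
  simp only [hammingNorm, Pi.add_apply, Pi.one_apply, add_one_ne_zero]
  rw [← Finset.compl_filter, Finset.card_compl]

theorem weightEnum_card_sub (hone : 1 ∈ C) {w : ℕ} (hw : w ≤ Fintype.card ι) :
    weightEnum C (Fintype.card ι - w) = weightEnum C w := by
  rw [weightEnum, weightEnum, ← Set.ncard_image_of_injective _ (add_left_injective 1)]
  congr 1
  ext x
  have hx : hammingNorm x ≤ Fintype.card ι := hammingNorm_le_card_fintype
  have add_one_add_one : x + 1 + 1 = x := funext fun i ↦ by
    simp [add_assoc, CharTwo.add_self_eq_zero]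
  constructor
  · rintro ⟨y, ⟨hy, hyw⟩, rfl⟩
    refine ⟨C.add_mem hy hone, ?_⟩
    rw [hammingNorm_add_one]
    omega
  · rintro ⟨hxC, hxw⟩
    refine ⟨x + 1, ⟨C.add_mem hxC hone, ?_⟩, add_one_add_one⟩
    rw [hammingNorm_add_one, hxw]

theorem weight_cases_of_weightEnum_ne_zero {d w : ℕ} (hone : 1 ∈ C)
    (hmin : ∀ x ∈ C, x ≠ 0 → d ≤ hammingNorm x) (hw : weightEnum C w ≠ 0) :
    w = 0 ∨ w = Fintype.card ι ∨ d ≤ w ∧ w + d ≤ Fintype.card ι := by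
  obtain ⟨x, hx, rfl⟩ := exists_mem_of_weightEnum_ne_zero hw
  have weight_le : hammingNorm x ≤ Fintype.card ι := hammingNorm_le_card_fintype
  have weight_bound := hmin x hx
  have compl_weight_bound := hmin (x + 1) (C.add_mem hx hone)
  rw [← hammingNorm_ne_zero_iff] at weight_bound compl_weight_bound
  rw [hammingNorm_add_one] at compl_weight_bound
  omega

end WeightDistribution

end LinearCode

open LinearCode

namespace IsSelfDual

variable {ι : Type*} [Fintype ι] {C : Submodule (ZMod 2) (ι → ZMod 2)}

theorem dual_eq (hC : IsSelfDual C) : dual C = C :=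
  Submodule.ext fun v ↦ mem_dual.trans (hC v).symm

theorem card_mul_self (hC : IsSelfDual C) : Nat.card C * Nat.card C = 2 ^ Fintype.card ι := by
  have dim := finrank_add_finrank_dual C
  rw [hC.dual_eq] at dim
  rw [Module.natCard_eq_pow_finrank (K := ZMod 2), Nat.card_zmod, ← pow_add, dim]

theorem one_mem (hC : IsSelfDual C) : 1 ∈ C := by
  refine (hC 1).2 fun y hy ↦ ?_
  have mul_self : ∀ a : ZMod 2, 1 * a = a * a := by decide
  calc dot 1 y = dot y y := Finset.sum_congr rfl fun i _ ↦ mul_self (y i)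
    _ = 0 := (hC y).1 hy y hy

theorem card_mul_sum_weightEnum (hC : IsSelfDual C) {d : ℕ}
    (hmin : ∀ x ∈ C, x ≠ 0 → d ≤ hammingNorm x) {R : Type*} [CommRing R] [IsDomain R]
    [CharZero R] {p : Polynomial R} (hp : p.natDegree < d) :
    (Nat.card C : R) *
        ∑ w ∈ Finset.range (Fintype.card ι + 1), (weightEnum C w : R) * p.eval (w : R) =
      ∑ w ∈ Finset.range (Fintype.card ι + 1),
        ((Fintype.card ι).choose w : R) * p.eval (w : R) := by
  classical
  have average := card_mul_sum_eval_hammingNorm (C := C) (hC.dual_eq.symm ▸ hmin) hp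
  rw [sum_comp_hammingNorm C fun w ↦ p.eval (w : R),
    sum_univ_comp_hammingNorm fun w ↦ p.eval (w : R)] at average
  have card_space : Nat.card (ι → ZMod 2) = Nat.card C * Nat.card C := by
    rw [hC.card_mul_self, Nat.card_fun, Nat.card_zmod, Nat.card_eq_fintype_card]
  simp only [nsmul_eq_mul] at average
  rw [card_space, Nat.cast_mul, mul_assoc] at average
  exact mul_left_cancel₀ (Nat.cast_ne_zero.2 Nat.card_pos.ne') average

end IsSelfDual

/-- The polynomial of degree `15` vanishing at `24, 28, …, 80`: of the weights possible in a doubly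
even self-dual code of length `96` and minimum weight at least `16`, only `0`, `16`, `20` and `96`
are not among its roots. -/
noncomputable def annihilator96 : Polynomial ℤ :=
  ∏ j ∈ Finset.range 15, (Polynomial.X - Polynomial.C (4 * j + 24 : ℤ))

namespace annihilator96

theorem natDegree_eq : annihilator96.natDegree = 15 := by
  rw [annihilator96, Polynomial.natDegree_finsetProd_X_sub_C_eq_card, Finset.card_range]

theorem eval_eq (z : ℤ) : annihilator96.eval z = ∏ j ∈ Finset.range 15, (z - (4 * j + 24)) := by
  simp [annihilator96, Polynomial.eval_prod]

theorem eval_eq_zero {w : ℕ} (h4 : 4 ∣ w) (h24 : 24 ≤ w) (h80 : w ≤ 80) :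
    annihilator96.eval (w : ℤ) = 0 := by
  rw [eval_eq]
  exact Finset.prod_eq_zero (i := (w - 24) / 4) (Finset.mem_range.2 (by omega)) (by omega)

theorem eval_twenty_ne_zero : annihilator96.eval 20 ≠ 0 := by
  rw [eval_eq]
  decide +kernel

-- The constants come from `annihilator96.eval (4 * v) = -4 ^ 15 * 15! * choose (20 - v) 15`, with
-- the generalised binomial coefficient `choose (-4) 15 = -choose 18 15` at `v = 24`.
theorem eval_zero : annihilator96.eval 0 = 15504 * annihilator96.eval 20 := by
  simp only [eval_eq]
  decide +kernel

theorem eval_sixteen : annihilator96.eval 16 = 16 * annihilator96.eval 20 := by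
  simp only [eval_eq]
  decide +kernel

theorem eval_ninetySix : annihilator96.eval 96 = -816 * annihilator96.eval 20 := by
  simp only [eval_eq]
  decide +kernel

theorem sum_choose_mul_eval :
    ∑ w ∈ Finset.range 97, (Nat.choose 96 w : ℤ) * annihilator96.eval (w : ℤ) =
      2 ^ 48 * (3231744 * annihilator96.eval 20) := by
  simp only [eval_eq]
  decide +kernel

end annihilator96

section LengthNinetySix

variable {C : Submodule (ZMod 2) (Fin 96 → ZMod 2)}

theorem weightEnum_mul_eval_annihilator96_eq_zero (hone : 1 ∈ C)
    (hde : ∀ x ∈ C, hammingNorm x % 4 = 0) (hmin : ∀ x ∈ C, x ≠ 0 → 16 ≤ hammingNorm x) {w : ℕ}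
    (hw : w ∉ ({0, 16, 20, 96} : Finset ℕ)) :
    (weightEnum C w : ℤ) * annihilator96.eval (w : ℤ) = 0 := by
  refine mul_eq_zero.2 (or_iff_not_imp_left.2 fun hcount ↦ ?_)
  rw [Nat.cast_eq_zero] at hcount
  have four_dvd : 4 ∣ w := by
    obtain ⟨x, hx, rfl⟩ := exists_mem_of_weightEnum_ne_zero hcount
    exact Nat.dvd_of_mod_eq_zero (hde x hx)
  have weight_cases := weight_cases_of_weightEnum_ne_zero hone hmin hcount
  simp only [Finset.mem_insert, Finset.mem_singleton] at hw
  rw [Fintype.card_fin] at weight_cases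
  exact annihilator96.eval_eq_zero four_dvd (by omega) (by omega)

theorem sum_weightEnum_mul_eval_annihilator96 (hone : 1 ∈ C)
    (hde : ∀ x ∈ C, hammingNorm x % 4 = 0) (hmin : ∀ x ∈ C, x ≠ 0 → 16 ≤ hammingNorm x) :
    ∑ w ∈ Finset.range 97, (weightEnum C w : ℤ) * annihilator96.eval (w : ℤ) =
      (15504 + 16 * weightEnum C 16 + weightEnum C 20 - 816) * annihilator96.eval 20 := by
  have weightEnum_ninetySix : weightEnum C 96 = 1 := by
    simpa [weightEnum_zero] using weightEnum_card_sub hone (Nat.zero_le _)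
  rw [← Finset.sum_subset (by decide) fun w _ ↦
    weightEnum_mul_eval_annihilator96_eq_zero hone hde hmin]
  simp only [Finset.mem_insert, Finset.mem_singleton, OfNat.zero_ne_ofNat, Nat.reduceEqDiff,
    or_self, not_false_eq_true, Finset.sum_insert, Finset.sum_singleton, Nat.cast_zero,
    Nat.cast_one, Nat.cast_ofNat, weightEnum_zero, weightEnum_ninetySix, annihilator96.eval_zero,
    annihilator96.eval_sixteen, annihilator96.eval_ninetySix]
  ring

end LengthNinetySix

theorem gleason_doubly_even_96 (C : Submodule (ZMod 2) (Fin 96 → ZMod 2))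
    (hsd : IsSelfDual C) (hde : ∀ x ∈ C, hammingNorm x % 4 = 0)
    (hmin : ∀ x ∈ C, x ≠ 0 → 16 ≤ hammingNorm x) :
    (weightEnum C 20 : ℤ) = 3217056 - 16 * (weightEnum C 16 : ℤ) ∧
    weightEnum C 16 ≤ 201066 := by
  have card_eq : Nat.card C = 2 ^ 48 :=
    Nat.mul_self_inj.1 (by rw [hsd.card_mul_self, Fintype.card_fin]; norm_num)
  have moment := hsd.card_mul_sum_weightEnum hmin
    (p := annihilator96) (by rw [annihilator96.natDegree_eq]; norm_num)
  rw [Fintype.card_fin, sum_weightEnum_mul_eval_annihilator96 hsd.one_mem hde hmin,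
    annihilator96.sum_choose_mul_eval, card_eq, Nat.cast_pow, Nat.cast_ofNat] at moment
  have count : (15504 + 16 * weightEnum C 16 + weightEnum C 20 - 816 : ℤ) = 3231744 := by
    refine mul_right_cancel₀ annihilator96.eval_twenty_ne_zero (mul_left_cancel₀ ?_ moment)
    positivity
  omega
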